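/- Let P be a d×d block homogeneous correlation matrix with block sizes d1,…,dS, diagonal blocks (1 − ρ_{ss})I_{ds} + ρ_{ss}J_{ds} satisfying −1/(ds − 1) < ρ_{ss} < 1, and off-diagonal blocks ρ_{s1s2}J_{d_{s1}d_{s2}}. Define the S×S matrix M = (m_{kl}) by m_{kk} = 1 and, for k ≠ l, m_{kl} = d_k d_l ρ_{kl} / ((1 + (d_k − 1)ρ_{kk})(1 + (d_l − 1)ρ_{ll})). If M is the Pearson correlation matrix of some S-dimensional random vector with all margins uniform on (0,1), then P is the Pearson correlation matrix of some d-dimensional random vector with all margins uniform on (0,1); moreover such a vector can be constructed explicitly as W_{s} = B_s U_s 1_{ds} + (1 − B_s)V_s, where U = (U1,…,US) has uniform margins and correlation matrix M, the V_s are independent ds-dimensional vectors with uniform margins and correlation matrix Γ_{ds}(1, −1/(ds−1)), B_s ~ Bern(λ_s) with λ_s = (1 + (ds − 1)ρ_{ss})/ds, and U, all V_s, and all B_s are mutually independent. -/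

import Mathlib

open MeasureTheory ProbabilityTheory Set

noncomputable section

/-- The `d×d` block homogeneous matrix with `S` blocks of sizes `ds 0, …, ds (S-1)`
(indexed by the sigma type `(s : Fin S) × Fin (ds s)`): the `(s,s)` diagonal block is
the compound symmetry matrix `(1 − ρ_{ss}) I + ρ_{ss} J` and the `(s₁,s₂)` off-diagonal
block is the constant matrix `ρ_{s₁s₂} J`. -/
def blockMatrix (S : ℕ) (ds : Fin S → ℕ) (ρ : Fin S → Fin S → ℝ) :
    Matrix ((s : Fin S) × Fin (ds s)) ((s : Fin S) × Fin (ds s)) ℝ :=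
  Matrix.of fun i j =>
    if i.1 = j.1 then (if (i.2 : ℕ) = (j.2 : ℕ) then (1:ℝ) else ρ i.1 i.1)
    else ρ i.1 j.1

/-- The block average map `φ(P)`: `φ(P)_{ss} = (1 + (ds − 1) ρ_{ss})/ds` and
`φ(P)_{s₁s₂} = ρ_{s₁s₂}` for `s₁ ≠ s₂`. -/
def blockAvg (S : ℕ) (ds : Fin S → ℕ) (ρ : Fin S → Fin S → ℝ) :
    Matrix (Fin S) (Fin S) ℝ :=
  Matrix.of fun s t =>
    if s = t then (1 + ((ds s : ℝ) - 1) * ρ s s) / (ds s : ℝ) else ρ s t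

/-- The uniform distribution on (0,1). -/
def unif01 : Measure ℝ := volume.restrict (Set.Ioo (0:ℝ) 1)

/-- Pearson's correlation coefficient of two real random variables. -/
def pearson {Ω : Type*} [MeasurableSpace Ω] (μ : Measure Ω) (Y1 Y2 : Ω → ℝ) : ℝ :=
  ((∫ ω, Y1 ω * Y2 ω ∂μ) - (∫ ω, Y1 ω ∂μ) * (∫ ω, Y2 ω ∂μ)) /
    Real.sqrt (variance Y1 μ * variance Y2 μ)

/-- The Bernoulli distribution `Bern(p)` on ℝ. -/
def bern (p : ℝ) : Measure ℝ :=
  ENNReal.ofReal p • Measure.dirac (1:ℝ) + ENNReal.ofReal (1 - p) • Measure.dirac (0:ℝ)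

/-- The `S×S` matrix `M` with `m_{kk} = 1` and
`m_{kl} = d_k d_l ρ_{kl} / ((1 + (d_k − 1)ρ_{kk})(1 + (d_l − 1)ρ_{ll}))` for `k ≠ l`. -/
def corrM (S : ℕ) (ds : Fin S → ℕ) (ρ : Fin S → Fin S → ℝ) : Matrix (Fin S) (Fin S) ℝ :=
  Matrix.of fun k l => if k = l then (1:ℝ) else
    (ds k : ℝ) * (ds l : ℝ) * ρ k l /
      ((1 + ((ds k : ℝ) - 1) * ρ k k) * (1 + ((ds l : ℝ) - 1) * ρ l l))

/-- `λ_s = (1 + (d_s − 1)ρ_{ss})/d_s`. -/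
def lamb (S : ℕ) (ds : Fin S → ℕ) (ρ : Fin S → Fin S → ℝ) (s : Fin S) : ℝ :=
  (1 + ((ds s : ℝ) - 1) * ρ s s) / (ds s : ℝ)

/-- The sample space carrying the independent ingredients `U`, `(V_s)_s`, `(B_s)_s`. -/
abbrev mixSpace (S : ℕ) (ds : Fin S → ℕ) : Type :=
  (Fin S → ℝ) × (((s : Fin S) → (Fin (ds s) → ℝ)) × (Fin S → ℝ))

/-- The joint law of the independent ingredients: `U ~ μU`, `V_s ~ V s` independently,
and `B_s ~ Bern(λ_s)` independently. -/
def mixMeasure (S : ℕ) (ds : Fin S → ℕ) (ρ : Fin S → Fin S → ℝ)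
    (μU : Measure (Fin S → ℝ)) (V : (s : Fin S) → Measure (Fin (ds s) → ℝ)) :
    Measure (mixSpace S ds) :=
  μU.prod ((Measure.pi V).prod (Measure.pi fun s => bern (lamb S ds ρ s)))

/-- The constructed random vector `W_{(s,k)} = B_s U_s + (1 − B_s) V_{s,k}`. -/
def Wfun (S : ℕ) (ds : Fin S → ℕ) (i : (s : Fin S) × Fin (ds s)) (ω : mixSpace S ds) : ℝ :=
  ω.2.2 i.1 * ω.1 i.1 + (1 - ω.2.2 i.1) * ω.2.1 i.1 i.2

/-!
Conditionally on the switches, `W_s` is either the constant block `U_s 1` or `V_s`, so its entries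
stay uniform. As `U`, `V` and `B` are independent with equal means, the correlation of two entries
of `W` is the correlation in `U` weighted by `E[B_s B_t]` plus the correlation in `V` weighted by
`E[(1 - B_s)(1 - B_t)]`. Within block `s` this is `λ_s + (1 - λ_s) (-1 / (d_s - 1)) = ρ_ss`; between
blocks the `V`-term vanishes and `λ_s λ_t m_st = ρ_st` remains.

The law of `V_s` is obtained by permuting uniformly at random a vector with constant sum whose
margins are uniform on average: exchangeability makes all covariances equal, and the constant sum
makes the covariances of one entry with all entries add up to zero.
-/

section Pearson

variable {Ω Ω' : Type*} [MeasurableSpace Ω] [MeasurableSpace Ω'] {μ : Measure Ω}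
  {X Y : Ω → ℝ} {κ : Measure ℝ}

lemma memLp_of_hasLaw {q : ENNReal} (hκ : MemLp id q κ) (hX : HasLaw X κ μ) : MemLp X q μ := by
  rw [← hX.map_eq] at hκ
  exact (memLp_map_measure_iff aestronglyMeasurable_id hX.aemeasurable).1 hκ

lemma pearson_eq_covariance_div [IsProbabilityMeasure μ] (hX : MemLp X 2 μ) (hY : MemLp Y 2 μ) :
    pearson μ X Y = cov[X, Y; μ] / √(Var[X; μ] * Var[Y; μ]) := by
  rw [covariance_eq_sub hX hY]
  rfl

lemma pearson_eq_covariance_div_of_hasLaw [IsProbabilityMeasure κ] (hκ : MemLp id 2 κ)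
    (hX : HasLaw X κ μ) (hY : HasLaw Y κ μ) :
    pearson μ X Y = cov[X, Y; μ] / Var[id; κ] := by
  have := hX.isProbabilityMeasure
  rw [pearson_eq_covariance_div (memLp_of_hasLaw hκ hX) (memLp_of_hasLaw hκ hY), hX.variance_eq,
    hY.variance_eq, Real.sqrt_mul_self (variance_nonneg _ _)]

lemma pearson_self_of_hasLaw [IsProbabilityMeasure κ] (hκ : MemLp id 2 κ) (hvar : Var[id; κ] ≠ 0)
    (hX : HasLaw X κ μ) : pearson μ X X = 1 := by
  rw [pearson_eq_covariance_div_of_hasLaw hκ hX hX, covariance_self hX.aemeasurable,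
    hX.variance_eq, div_self hvar]

lemma pearson_eq_zero_of_indepFun (h : X ⟂ᵢ[μ] Y) (hX : AEStronglyMeasurable X μ)
    (hY : AEStronglyMeasurable Y μ) : pearson μ X Y = 0 := by
  rw [pearson, h.integral_fun_mul_eq_mul_integral hX hY, sub_self, zero_div]

lemma pearson_map {Z : Ω' → Ω} {μ' : Measure Ω'} (hZ : Measurable Z) (hX : Measurable X)
    (hY : Measurable Y) :
    pearson (μ'.map Z) X Y = pearson μ' (fun ω => X (Z ω)) (fun ω => Y (Z ω)) := by
  have hXY := integral_map (μ := μ') hZ.aemeasurable (hX.mul hY).aestronglyMeasurable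
  simp only [Pi.mul_apply] at hXY
  simp only [pearson, hXY, variance_map hX.aemeasurable hZ.aemeasurable,
    variance_map hY.aemeasurable hZ.aemeasurable,
    integral_map hZ.aemeasurable hX.aestronglyMeasurable,
    integral_map hZ.aemeasurable hY.aestronglyMeasurable, Function.comp_def]

lemma covariance_eq_zero_of_ae_eq_const [IsProbabilityMeasure μ] {c : ℝ} (h : ∀ᵐ ω ∂μ, Y ω = c) :
    cov[X, Y; μ] = 0 := by
  have hmean : μ[Y] = c := by simpa using integral_congr_ae h
  refine integral_eq_zero_of_ae ?_
  filter_upwards [h] with ω hω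
  simp [hmean, hω]

end Pearson

section Product

lemma hasLaw_prodMap {Ω Ω' 𝓧 𝓨 : Type*} [MeasurableSpace Ω] [MeasurableSpace Ω']
    [MeasurableSpace 𝓧] [MeasurableSpace 𝓨] {μ : Measure Ω} {μ' : Measure Ω'}
    [IsProbabilityMeasure μ] [IsProbabilityMeasure μ'] {κ : Measure 𝓧} {κ' : Measure 𝓨}
    {X : Ω → 𝓧} {Y : Ω' → 𝓨} (hX : HasLaw X κ μ) (hY : HasLaw Y κ' μ') :
    HasLaw (Prod.map X Y) (κ.prod κ') (μ.prod μ') :=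
  (indepFun_prod₀ hX.aemeasurable hY.aemeasurable).hasLaw_prod
    (hX.comp measurePreserving_fst.hasLaw) (hY.comp measurePreserving_snd.hasLaw)

variable {ι : Type*} [Fintype ι] {Ω : ι → Type*} [∀ i, MeasurableSpace (Ω i)]
  (μ : ∀ i, Measure (Ω i)) [∀ i, IsProbabilityMeasure (μ i)]

lemma indepFun_pi_eval {i j : ι} (hij : i ≠ j) :
    (fun ω : ∀ i, Ω i => ω i) ⟂ᵢ[Measure.pi μ] (fun ω => ω j) :=
  (iIndepFun_pi (X := fun _ => id) fun _ => aemeasurable_id).indepFun hij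

lemma pearson_pi_eval {i : ι} {f g : Ω i → ℝ} (hf : Measurable f) (hg : Measurable g) :
    pearson (Measure.pi μ) (fun ω => f (ω i)) (fun ω => g (ω i)) = pearson (μ i) f g := by
  rw [← (measurePreserving_eval μ i).map_eq, pearson_map (measurable_pi_apply i) hf hg]

lemma pearson_pi_eval_of_ne {i j : ι} (hij : i ≠ j) {f : Ω i → ℝ} {g : Ω j → ℝ}
    (hf : Measurable f) (hg : Measurable g) :
    pearson (Measure.pi μ) (fun ω => f (ω i)) (fun ω => g (ω j)) = 0 :=
  pearson_eq_zero_of_indepFun ((indepFun_pi_eval μ hij).comp hf hg)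
    (hf.comp (measurable_pi_apply i)).aestronglyMeasurable
    (hg.comp (measurable_pi_apply j)).aestronglyMeasurable

end Product

section Bernoulli

instance isFiniteMeasure_bern (p : ℝ) : IsFiniteMeasure (bern p) := by
  have := Measure.smul_finite (Measure.dirac (1 : ℝ)) (ENNReal.ofReal_ne_top (r := p))
  have := Measure.smul_finite (Measure.dirac (0 : ℝ)) (ENNReal.ofReal_ne_top (r := 1 - p))
  unfold bern
  infer_instance

lemma isProbabilityMeasure_bern {p : ℝ} (hp : p ∈ Icc 0 1) : IsProbabilityMeasure (bern p) := by
  constructor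
  simp [bern, ← ENNReal.ofReal_add hp.1 (sub_nonneg.2 hp.2)]

lemma memLp_id_bern (q : ENNReal) (p : ℝ) : MemLp id q (bern p) := by
  refine MemLp.of_bound aestronglyMeasurable_id 1 ?_
  rw [bern, ae_add_measure_iff]
  constructor <;> refine Measure.ae_smul_measure ?_ _ <;> simp [ae_dirac_eq]

lemma integral_bern {p : ℝ} (hp : p ∈ Icc 0 1) (f : ℝ → ℝ) :
    ∫ x, f x ∂bern p = p * f 1 + (1 - p) * f 0 := by
  have hint (a r : ℝ) : Integrable f (ENNReal.ofReal r • Measure.dirac a) :=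
    (integrable_dirac (by simp)).smul_measure ENNReal.ofReal_ne_top
  rw [bern, integral_add_measure (hint _ _) (hint _ _)]
  simp [ENNReal.toReal_ofReal hp.1, ENNReal.toReal_ofReal (sub_nonneg.2 hp.2)]

variable {Ω : Type*} [MeasurableSpace Ω] {β : Measure Ω} {b b' : Ω → ℝ} {p p' : ℝ}

lemma integral_comp_of_hasLaw_bern (hp : p ∈ Icc 0 1) (hb : HasLaw b (bern p) β) {f : ℝ → ℝ}
    (hf : Measurable f) : ∫ ω, f (b ω) ∂β = p * f 1 + (1 - p) * f 0 := by
  rw [← integral_bern hp, ← hb.integral_comp hf.aestronglyMeasurable]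
  rfl

lemma integral_mul_of_indepFun_bern (hp : p ∈ Icc 0 1) (hp' : p' ∈ Icc 0 1)
    (hb : HasLaw b (bern p) β) (hb' : HasLaw b' (bern p') β) (h : b ⟂ᵢ[β] b') {f : ℝ → ℝ}
    (hf : Measurable f) :
    ∫ ω, f (b ω) * f (b' ω) ∂β = (p * f 1 + (1 - p) * f 0) * (p' * f 1 + (1 - p') * f 0) := by
  rw [← integral_comp_of_hasLaw_bern hp hb hf, ← integral_comp_of_hasLaw_bern hp' hb' hf]
  exact (h.comp hf hf).integral_fun_mul_eq_mul_integral
    (hf.comp_aemeasurable hb.aemeasurable).aestronglyMeasurable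
    (hf.comp_aemeasurable hb'.aemeasurable).aestronglyMeasurable

end Bernoulli

section Switch

variable {Ω₁ Ω₂ Ω₃ : Type*}

/-- The random variable that equals `u` where the switch `b` is `1` and `v` where it is `0`; the
three arguments live on separate factors of a product space, so that they are independent under a
product measure. -/
def switch (u : Ω₁ → ℝ) (v : Ω₂ → ℝ) (b : Ω₃ → ℝ) (ω : Ω₁ × Ω₂ × Ω₃) : ℝ :=
  b ω.2.2 * u ω.1 + (1 - b ω.2.2) * v ω.2.1

variable [MeasurableSpace Ω₁] [MeasurableSpace Ω₂] [MeasurableSpace Ω₃]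
  {μ : Measure Ω₁} {ν : Measure Ω₂} {β : Measure Ω₃}
  [IsProbabilityMeasure μ] [IsProbabilityMeasure ν] [IsProbabilityMeasure β]
  {u u' : Ω₁ → ℝ} {v v' : Ω₂ → ℝ} {b b' : Ω₃ → ℝ}

lemma integral_prod_prod_mul (f : Ω₁ → ℝ) (g : Ω₂ → ℝ) (h : Ω₃ → ℝ) :
    ∫ ω, f ω.1 * (g ω.2.1 * h ω.2.2) ∂μ.prod (ν.prod β) =
      (∫ x, f x ∂μ) * ((∫ y, g y ∂ν) * ∫ z, h z ∂β) := by
  rw [integral_prod_mul f fun ω : Ω₂ × Ω₃ => g ω.1 * h ω.2, integral_prod_mul g h]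

lemma integral_switch (hu : Integrable u μ) (hv : Integrable v ν) (hb : Integrable b β)
    (huv : μ[u] = ν[v]) : ∫ ω, switch u v b ω ∂μ.prod (ν.prod β) = μ[u] := by
  have hb' : Integrable (fun z => 1 - b z) β := (integrable_const 1).sub hb
  have hexpand (ω : Ω₁ × Ω₂ × Ω₃) : switch u v b ω =
      u ω.1 * (1 * b ω.2.2) + 1 * (v ω.2.1 * (1 - b ω.2.2)) := by
    rw [switch]; ring
  simp_rw [hexpand]
  rw [integral_add (hu.mul_prod ((integrable_const 1).mul_prod hb))
      ((integrable_const 1).mul_prod (hv.mul_prod hb')),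
    integral_prod_prod_mul u (fun _ => 1) b,
    integral_prod_prod_mul (fun _ => 1) v fun z => 1 - b z,
    integral_sub (integrable_const 1) hb, ← huv]
  simp only [integral_const, probReal_univ, smul_eq_mul, mul_one, one_mul]
  ring

lemma integral_switch_mul_switch (hu : MemLp u 2 μ) (hu' : MemLp u' 2 μ) (hv : MemLp v 2 ν)
    (hv' : MemLp v' 2 ν) (hb : MemLp b 2 β) (hb' : MemLp b' 2 β)
    (hu0 : μ[u] = 0) (hu0' : μ[u'] = 0) :
    ∫ ω, switch u v b ω * switch u' v' b' ω ∂μ.prod (ν.prod β) =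
      (∫ z, b z * b' z ∂β) * (∫ x, u x * u' x ∂μ) +
        (∫ z, (1 - b z) * (1 - b' z) ∂β) * ∫ y, v y * v' y ∂ν := by
  have hc : MemLp (fun z => 1 - b z) 2 β := (memLp_const 1).sub hb
  have hc' : MemLp (fun z => 1 - b' z) 2 β := (memLp_const 1).sub hb'
  have huu := (hu.integrable_mul hu').mul_prod
    ((integrable_const (μ := ν) (1 : ℝ)).mul_prod (hb.integrable_mul hb'))
  have huv := (hu.integrable one_le_two).mul_prod
    ((hv'.integrable one_le_two).mul_prod (hb.integrable_mul hc'))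
  have hvu := (hu'.integrable one_le_two).mul_prod
    ((hv.integrable one_le_two).mul_prod (hc.integrable_mul hb'))
  have hvv := (integrable_const (μ := μ) (1 : ℝ)).mul_prod
    ((hv.integrable_mul hv').mul_prod (hc.integrable_mul hc'))
  have hexpand (ω : Ω₁ × Ω₂ × Ω₃) : switch u v b ω * switch u' v' b' ω =
      (u * u') ω.1 * (1 * (b * b') ω.2.2) +
        u ω.1 * (v' ω.2.1 * (b * fun z => 1 - b' z) ω.2.2) +
        u' ω.1 * (v ω.2.1 * ((fun z => 1 - b z) * b') ω.2.2) +
        1 * ((v * v') ω.2.1 * ((fun z => 1 - b z) * fun z => 1 - b' z) ω.2.2) := by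
    simp only [switch, Pi.mul_apply]; ring
  simp_rw [hexpand]
  rw [integral_add ((huu.fun_add huv).fun_add hvu) hvv, integral_add (huu.fun_add huv) hvu,
    integral_add huu huv, integral_prod_prod_mul _ fun _ => 1,
    integral_prod_prod_mul u, integral_prod_prod_mul u', integral_prod_prod_mul fun _ => 1,
    hu0, hu0']
  simp only [Pi.mul_apply, integral_const, probReal_univ, smul_eq_mul, mul_one, one_mul, zero_mul,
    add_zero]
  ring

/- Since `switch u v b - m = switch (u - m) (v - m) b`, all variables may be centred, which kills the
cross terms. -/
lemma covariance_switch (hu : MemLp u 2 μ) (hu' : MemLp u' 2 μ) (hv : MemLp v 2 ν)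
    (hv' : MemLp v' 2 ν) (hb : MemLp b 2 β) (hb' : MemLp b' 2 β)
    (huv : μ[u] = ν[v]) (huv' : μ[u'] = ν[v']) :
    cov[switch u v b, switch u' v' b'; μ.prod (ν.prod β)] =
      (∫ z, b z * b' z ∂β) * cov[u, u'; μ] +
        (∫ z, (1 - b z) * (1 - b' z) ∂β) * cov[v, v'; ν] := by
  have hcenter (f : Ω₁ → ℝ) (g : Ω₂ → ℝ) (h : Ω₃ → ℝ) (m : ℝ) (ω : Ω₁ × Ω₂ × Ω₃) :
      switch f g h ω - m = switch (f - fun _ => m) (g - fun _ => m) h ω := by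
    simp only [switch, Pi.sub_apply]; ring
  have hmean {f : Ω₁ → ℝ} (hf : MemLp f 2 μ) : μ[(f - fun _ => μ[f] : Ω₁ → ℝ)] = 0 := by
    simp [integral_sub (hf.integrable one_le_two) (integrable_const _)]
  rw [covariance, integral_switch (hu.integrable one_le_two) (hv.integrable one_le_two)
      (hb.integrable one_le_two) huv, integral_switch (hu'.integrable one_le_two)
      (hv'.integrable one_le_two) (hb'.integrable one_le_two) huv']
  simp_rw [hcenter]
  rw [integral_switch_mul_switch (hu.sub (memLp_const _)) (hu'.sub (memLp_const _))
    (hv.sub (memLp_const _)) (hv'.sub (memLp_const _)) hb hb' (hmean hu) (hmean hu')]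
  simp only [covariance, Pi.sub_apply, huv, huv']

variable {κ κ' : Measure ℝ} [IsProbabilityMeasure κ] [IsProbabilityMeasure κ'] {p p' : ℝ}

lemma map_switch_id_prod_bern :
    (κ.prod (κ'.prod (bern p))).map (switch id id id) =
      ENNReal.ofReal p • κ + ENNReal.ofReal (1 - p) • κ' := by
  have hmeas : Measurable (switch id id id : ℝ × ℝ × ℝ → ℝ) := by
    unfold switch; fun_prop
  have hat (x : ℝ) : (κ.prod (κ'.prod (Measure.dirac x))).map (switch id id id) =
      (κ.prod κ').map fun z => x * z.1 + (1 - x) * z.2 := by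
    nth_rw 1 [Measure.prod_dirac, ← Measure.map_id (μ := κ),
      Measure.map_prod_map _ _ measurable_id (by fun_prop), Measure.map_map hmeas (by fun_prop)]
    rfl
  rw [bern, Measure.prod_add, Measure.prod_smul_right, Measure.prod_smul_right, Measure.prod_add,
    Measure.prod_smul_right, Measure.prod_smul_right, Measure.map_add _ _ hmeas,
    Measure.map_smul, Measure.map_smul, hat, hat]
  simp [Measure.map_fst_prod, Measure.map_snd_prod]

lemma hasLaw_switch_mixture (hu : HasLaw u κ μ) (hv : HasLaw v κ' ν) (hb : HasLaw b (bern p) β) :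
    HasLaw (switch u v b) (ENNReal.ofReal p • κ + ENNReal.ofReal (1 - p) • κ')
      (μ.prod (ν.prod β)) := by
  have hmeas : Measurable (switch id id id : ℝ × ℝ × ℝ → ℝ) := by
    unfold switch; fun_prop
  have hid : HasLaw (switch id id id) _ (κ.prod (κ'.prod (bern p))) :=
    ⟨hmeas.aemeasurable, map_switch_id_prod_bern⟩
  exact hid.comp (hasLaw_prodMap hu (hasLaw_prodMap hv hb))

lemma hasLaw_switch (hu : HasLaw u κ μ) (hv : HasLaw v κ ν)
    (hb : HasLaw b (bern p) β) : HasLaw (switch u v b) κ (μ.prod (ν.prod β)) := by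
  have htotal : ENNReal.ofReal p + ENNReal.ofReal (1 - p) = 1 := by
    have := hb.isProbabilityMeasure_iff.1 inferInstance
    simpa [bern] using measure_univ (μ := bern p)
  simpa only [← add_smul, htotal, one_smul] using hasLaw_switch_mixture hu hv hb

lemma pearson_switch (hκ : MemLp id 2 κ)
    (hu : HasLaw u κ μ) (hu' : HasLaw u' κ μ) (hv : HasLaw v κ ν) (hv' : HasLaw v' κ ν)
    (hb : HasLaw b (bern p) β) (hb' : HasLaw b' (bern p') β) :
    pearson (μ.prod (ν.prod β)) (switch u v b) (switch u' v' b') =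
      (∫ z, b z * b' z ∂β) * pearson μ u u' +
        (∫ z, (1 - b z) * (1 - b' z) ∂β) * pearson ν v v' := by
  rw [pearson_eq_covariance_div_of_hasLaw hκ (hasLaw_switch hu hv hb)
      (hasLaw_switch hu' hv' hb'),
    pearson_eq_covariance_div_of_hasLaw hκ hu hu', pearson_eq_covariance_div_of_hasLaw hκ hv hv',
    covariance_switch (memLp_of_hasLaw hκ hu) (memLp_of_hasLaw hκ hu') (memLp_of_hasLaw hκ hv)
      (memLp_of_hasLaw hκ hv') (memLp_of_hasLaw (memLp_id_bern 2 p) hb)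
      (memLp_of_hasLaw (memLp_id_bern 2 p') hb') (hu.integral_eq.trans hv.integral_eq.symm)
      (hu'.integral_eq.trans hv'.integral_eq.symm)]
  ring

lemma pearson_switch_self (hκ : MemLp id 2 κ) (hp : p ∈ Icc 0 1) (hu : HasLaw u κ μ)
    (hu' : HasLaw u' κ μ) (hv : HasLaw v κ ν) (hv' : HasLaw v' κ ν) (hb : HasLaw b (bern p) β) :
    pearson (μ.prod (ν.prod β)) (switch u v b) (switch u' v' b) =
      p * pearson μ u u' + (1 - p) * pearson ν v v' := by
  rw [pearson_switch hκ hu hu' hv hv' hb hb,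
    integral_comp_of_hasLaw_bern hp hb (f := fun x => x * x) (by fun_prop),
    integral_comp_of_hasLaw_bern hp hb (f := fun x => (1 - x) * (1 - x)) (by fun_prop)]
  ring

lemma pearson_switch_of_indepFun (hκ : MemLp id 2 κ) (hp : p ∈ Icc 0 1) (hp' : p' ∈ Icc 0 1)
    (hu : HasLaw u κ μ) (hu' : HasLaw u' κ μ) (hv : HasLaw v κ ν) (hv' : HasLaw v' κ ν)
    (hb : HasLaw b (bern p) β) (hb' : HasLaw b' (bern p') β) (h : b ⟂ᵢ[β] b') :
    pearson (μ.prod (ν.prod β)) (switch u v b) (switch u' v' b') =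
      p * p' * pearson μ u u' + (1 - p) * (1 - p') * pearson ν v v' := by
  rw [pearson_switch hκ hu hu' hv hv' hb hb',
    integral_mul_of_indepFun_bern hp hp' hb hb' h (f := fun x => x) (by fun_prop),
    integral_mul_of_indepFun_bern hp hp' hb hb' h (f := fun x => 1 - x) (by fun_prop)]
  ring

end Switch

section Exchangeable

variable {ι E : Type*} [MeasurableSpace E] {μ : Measure (ι → E)}

lemma measurable_comp_perm (σ : Equiv.Perm ι) : Measurable fun v : ι → E => v ∘ σ := by
  fun_prop

/-- Exchangeability of a random family, as a property of its law: the law is invariant under all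
permutations of the index set. -/
def IsExchangeable (μ : Measure (ι → E)) : Prop :=
  ∀ σ : Equiv.Perm ι, μ.map (fun v => v ∘ σ) = μ

lemma IsExchangeable.map_eval_eq (hμ : IsExchangeable μ) (i j : ι) :
    μ.map (fun v => v i) = μ.map (fun v => v j) := by
  classical
  conv_rhs => rw [← hμ (Equiv.swap i j), Measure.map_map (by fun_prop) (by fun_prop)]
  simp [Function.comp_def]

lemma IsExchangeable.covariance_eq {μ : Measure (ι → ℝ)} (hμ : IsExchangeable μ)
    {i j k : ι} (hij : i ≠ j) (hik : i ≠ k) :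
    cov[fun v => v i, fun v => v j; μ] = cov[fun v => v i, fun v => v k; μ] := by
  classical
  conv_rhs => rw [← hμ (Equiv.swap j k),
    covariance_map_fun (measurable_pi_apply i).aestronglyMeasurable
      (measurable_pi_apply k).aestronglyMeasurable (measurable_comp_perm _).aemeasurable]
  simp [Equiv.swap_apply_of_ne_of_ne hij hik]

lemma IsExchangeable.card_sub_one_mul_covariance [Fintype ι] {μ : Measure (ι → ℝ)}
    [IsProbabilityMeasure μ] (hμ : IsExchangeable μ)
    (hL2 : ∀ i, MemLp (fun v => v i) 2 μ) {c : ℝ} (hsum : ∀ᵐ v ∂μ, ∑ k, v k = c)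
    {i j : ι} (hij : i ≠ j) :
    ((Fintype.card ι : ℝ) - 1) * cov[fun v => v i, fun v => v j; μ] = -Var[fun v => v i; μ] := by
  classical
  have hzero : ∑ k, cov[fun v => v i, fun v => v k; μ] = 0 := by
    rw [← covariance_fun_sum_right hL2 (hL2 i), covariance_eq_zero_of_ae_eq_const hsum]
  rw [← Finset.add_sum_erase _ _ (Finset.mem_univ i),
    covariance_self (measurable_pi_apply i).aemeasurable,
    Finset.sum_congr rfl fun k hk => hμ.covariance_eq (Finset.ne_of_mem_erase hk).symm hij,
    Finset.sum_const, nsmul_eq_mul, Finset.card_erase_of_mem (Finset.mem_univ i),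
    Finset.card_univ, Nat.cast_pred (Fintype.card_pos_iff.2 ⟨i⟩)] at hzero
  linarith

lemma IsExchangeable.pearson_eq_neg_one_div [Fintype ι] {μ : Measure (ι → ℝ)}
    (hμ : IsExchangeable μ) {κ : Measure ℝ} [IsProbabilityMeasure κ] (hκ : MemLp id 2 κ)
    (hvar : Var[id; κ] ≠ 0) (hlaw : ∀ i, HasLaw (fun v => v i) κ μ) {c : ℝ}
    (hsum : ∀ᵐ v ∂μ, ∑ k, v k = c) {i j : ι} (hij : i ≠ j) :
    pearson μ (fun v => v i) (fun v => v j) = -(1 / ((Fintype.card ι : ℝ) - 1)) := by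
  have := (hlaw i).isProbabilityMeasure
  have hcov := hμ.card_sub_one_mul_covariance (fun i => memLp_of_hasLaw hκ (hlaw i)) hsum hij
  have hcard : (1 : ℝ) < Fintype.card ι := by
    exact_mod_cast Fintype.one_lt_card_iff.2 ⟨i, j, hij⟩
  rw [(hlaw i).variance_eq] at hcov
  rw [pearson_eq_covariance_div_of_hasLaw hκ (hlaw i) (hlaw j), div_eq_iff hvar, ← neg_div,
    div_mul_eq_mul_div, eq_div_iff (sub_pos.2 hcard).ne', mul_comm, hcov, neg_one_mul]

variable [Fintype ι] [DecidableEq ι]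

/-- The average of a law over all permutations of the index set, which is exchangeable: the law of
`v ∘ σ` for `v` of law `μ` and an independent uniformly random permutation `σ`. -/
def symmetrization (μ : Measure (ι → E)) : Measure (ι → E) :=
  (Fintype.card (Equiv.Perm ι) : ENNReal)⁻¹ • ∑ σ : Equiv.Perm ι, μ.map (fun v => v ∘ σ)

lemma inv_card_perm_mul_card_perm :
    (Fintype.card (Equiv.Perm ι) : ENNReal)⁻¹ * Fintype.card (Equiv.Perm ι) = 1 :=
  ENNReal.inv_mul_cancel (by simp) (ENNReal.natCast_ne_top _)

instance isProbabilityMeasure_symmetrization [IsProbabilityMeasure μ] :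
    IsProbabilityMeasure (symmetrization μ) := by
  have (σ : Equiv.Perm ι) : IsProbabilityMeasure (μ.map fun v => v ∘ σ) :=
    Measure.isProbabilityMeasure_map (measurable_comp_perm σ).aemeasurable
  constructor
  simp only [symmetrization, Measure.smul_apply, Measure.finsetSum_apply, measure_univ,
    Finset.sum_const, Finset.card_univ, nsmul_eq_mul, mul_one, smul_eq_mul,
    inv_card_perm_mul_card_perm]

lemma map_symmetrization {F : Type*} [MeasurableSpace F] {f : (ι → E) → F} (hf : Measurable f) :
    (symmetrization μ).map f = (Fintype.card (Equiv.Perm ι) : ENNReal)⁻¹ •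
      ∑ σ : Equiv.Perm ι, μ.map (fun v => f (v ∘ σ)) := by
  rw [symmetrization, Measure.map_smul, Measure.map_finset_sum hf.aemeasurable]
  congr! 2 with σ
  exact Measure.map_map hf (by fun_prop)

lemma isExchangeable_symmetrization : IsExchangeable (symmetrization μ) := by
  intro τ
  rw [map_symmetrization (by fun_prop), symmetrization]
  congr 1
  exact Fintype.sum_equiv (Equiv.mulRight τ) _ _ fun σ => rfl

lemma sum_map_eval_symmetrization :
    ∑ i, (symmetrization μ).map (fun v => v i) = ∑ i, μ.map (fun v => v i) := by
  have hperm (σ : Equiv.Perm ι) :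
      ∑ i, μ.map (fun v => (v ∘ σ) i) = ∑ i, μ.map (fun v => v i) :=
    Equiv.sum_comp σ fun i => μ.map (fun v => v i)
  simp_rw [map_symmetrization (measurable_pi_apply _)]
  rw [← Finset.smul_sum, Finset.sum_comm, Finset.sum_congr rfl fun σ _ => hperm σ,
    Finset.sum_const, Finset.card_univ, ← Nat.cast_smul_eq_nsmul ENNReal, smul_smul,
    inv_card_perm_mul_card_perm, one_smul]

lemma map_eval_symmetrization_eq {κ : Measure E}
    (h : ∑ i, μ.map (fun v => v i) = (Fintype.card ι : ENNReal) • κ) (i : ι) :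
    (symmetrization μ).map (fun v => v i) = κ := by
  have hcard : (Fintype.card ι : ENNReal) ≠ 0 := by
    exact_mod_cast (Fintype.card_pos_iff.2 ⟨i⟩).ne'
  have hsmul : (Fintype.card ι : ENNReal) • (symmetrization μ).map (fun v => v i) =
      (Fintype.card ι : ENNReal) • κ := by
    rw [← h, ← sum_map_eval_symmetrization,
      Finset.sum_congr rfl fun j _ => isExchangeable_symmetrization.map_eval_eq j i,
      Finset.sum_const, Finset.card_univ, Nat.cast_smul_eq_nsmul]
  simpa [smul_smul, ENNReal.inv_mul_cancel hcard (ENNReal.natCast_ne_top _)] using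
    congrArg ((Fintype.card ι : ENNReal)⁻¹ • ·) hsmul

lemma ae_symmetrization {q : (ι → E) → Prop} (hq : MeasurableSet {v | q v})
    (hperm : ∀ (σ : Equiv.Perm ι) v, q v → q (v ∘ σ)) (h : ∀ᵐ v ∂μ, q v) :
    ∀ᵐ v ∂symmetrization μ, q v := by
  refine Measure.ae_smul_measure ?_ _
  rw [ae_iff, Measure.finsetSum_apply, Finset.sum_eq_zero]
  intro σ _
  rw [← ae_iff, ae_map_iff (measurable_comp_perm σ).aemeasurable hq]
  filter_upwards [h] with v hv using hperm σ v hv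

end Exchangeable

section Uniform

instance isProbabilityMeasure_unif01 : IsProbabilityMeasure unif01 := ⟨by simp [unif01]⟩

lemma unif01_eq_restrict_Ioc : unif01 = volume.restrict (Ioc 0 1) :=
  Measure.restrict_congr_set Ioo_ae_eq_Ioc

lemma memLp_id_unif01 (q : ENNReal) : MemLp id q unif01 := by
  refine MemLp.of_bound aestronglyMeasurable_id 1 ?_
  filter_upwards [ae_restrict_mem measurableSet_Ioo] with x hx
  exact abs_le.2 ⟨by simp only [id]; linarith [hx.1], hx.2.le⟩

lemma integral_pow_unif01 (n : ℕ) : ∫ x, x ^ n ∂unif01 = 1 / (n + 1) := by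
  rw [unif01_eq_restrict_Ioc, ← intervalIntegral.integral_of_le zero_le_one, integral_pow]
  simp

lemma variance_id_unif01 : Var[id; unif01] = 1 / 12 := by
  have h1 := integral_pow_unif01 1
  have h2 := integral_pow_unif01 2
  simp only [pow_one] at h1
  rw [variance_eq_sub (memLp_id_unif01 2)]
  simp only [Pi.pow_apply, id, h1, h2]
  norm_num

lemma map_one_sub_unif01 : unif01.map (fun y => 1 - y) = unif01 := by
  have h := (Measure.measurePreserving_sub_left (volume : Measure ℝ) 1).restrict_preimage
    (measurableSet_Ioo (a := 0) (b := 1))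
  rw [preimage_const_sub_Ioo, sub_self, sub_zero] at h
  exact h.map_eq

lemma map_add_div_unif01 {n : ℝ} (hn : 0 < n) (k : ℝ) :
    unif01.map (fun y => (y + k) / n) =
      ENNReal.ofReal n • volume.restrict (Ioc (k / n) ((k + 1) / n)) := by
  have hvolume : (volume : Measure ℝ).map (fun y => (y + k) / n) = ENNReal.ofReal n • volume := by
    have hcomp : (fun y : ℝ => (y + k) / n) = (· * n⁻¹) ∘ (· + k) := by
      ext; simp [div_eq_mul_inv]
    rw [hcomp, ← Measure.map_map (by fun_prop) (by fun_prop),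
      (measurePreserving_add_right volume k).map_eq,
      Real.map_volume_mul_right (inv_ne_zero hn.ne'), inv_inv, abs_of_pos hn]
  have hpreimage : (fun y => (y + k) / n) ⁻¹' Ioc (k / n) ((k + 1) / n) = Ioc 0 1 := by
    ext y
    simp only [mem_preimage, mem_Ioc, div_lt_div_iff_of_pos_right hn,
      div_le_div_iff_of_pos_right hn, lt_add_iff_pos_left, add_comm k, add_le_add_iff_right]
  rw [← Measure.restrict_smul, ← hvolume, Measure.restrict_map (by fun_prop) measurableSet_Ioc,
    hpreimage, unif01_eq_restrict_Ioc]

lemma sum_restrict_Ioc_succ (μ : Measure ℝ) {a : ℕ → ℝ} (ha : Monotone a) (N : ℕ) :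
    ∑ k ∈ Finset.range N, μ.restrict (Ioc (a k) (a (k + 1))) = μ.restrict (Ioc (a 0) (a N)) := by
  induction N with
  | zero => simp
  | succ N ih =>
    rw [Finset.sum_range_succ, ih,
      ← Measure.restrict_union (Ioc_disjoint_Ioc_of_le le_rfl) measurableSet_Ioc,
      Ioc_union_Ioc_eq_Ioc (ha N.zero_le) (ha N.le_succ)]

lemma sum_map_add_div_unif01 {n : ℕ} (hn : n ≠ 0) :
    ∑ k : Fin n, unif01.map (fun y : ℝ => (y + k) / n) = (n : ENNReal) • unif01 := by
  have hn' : (0 : ℝ) < n := by exact_mod_cast hn.pos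
  have hmono : Monotone fun k : ℕ => (k : ℝ) / n := fun _ _ _ => by dsimp only; gcongr
  have htile := sum_restrict_Ioc_succ volume hmono n
  simp only [Nat.cast_zero, zero_div, div_self hn'.ne', Nat.cast_succ] at htile
  simp_rw [map_add_div_unif01 hn', ← Finset.smul_sum, ENNReal.ofReal_natCast]
  rw [Fin.sum_univ_eq_sum_range fun k : ℕ => volume.restrict (Ioc ((k : ℝ) / n) ((k + 1) / n)),
    htile, unif01_eq_restrict_Ioc]

/-- The points `(y + k) / n` for `k < n`, one in each cell of the partition of `[0, 1]` into `n`
equal cells, together with `1 - y`, which makes the sum of all `n + 1` entries independent of `y`.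
For uniform `y`, a uniformly chosen entry is again uniform. -/
def stratifiedVec (n : ℕ) (y : ℝ) : Fin (n + 1) → ℝ :=
  Fin.cons (1 - y) fun k => (y + k) / n

lemma measurable_stratifiedVec (n : ℕ) : Measurable (stratifiedVec n) :=
  measurable_pi_iff.2 <| Fin.cases (by simp only [stratifiedVec, Fin.cons_zero]; fun_prop)
    fun k => by simp only [stratifiedVec, Fin.cons_succ]; fun_prop

lemma sum_stratifiedVec {n : ℕ} (hn : n ≠ 0) (y : ℝ) :
    ∑ k, stratifiedVec n y k = 1 + ∑ k : Fin n, (k : ℝ) / n := by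
  have hn' : (n : ℝ) ≠ 0 := by exact_mod_cast hn
  simp only [stratifiedVec, Fin.sum_univ_succ, Fin.cons_zero, Fin.cons_succ, add_div,
    Finset.sum_add_distrib, Finset.sum_const, Finset.card_univ, Fintype.card_fin, nsmul_eq_mul,
    mul_div_cancel₀ y hn']
  ring

lemma sum_map_eval_stratifiedVec {n : ℕ} (hn : n ≠ 0) :
    ∑ k, (unif01.map (stratifiedVec n)).map (fun v => v k) =
      (Fintype.card (Fin (n + 1)) : ENNReal) • unif01 := by
  simp_rw [Measure.map_map (measurable_pi_apply _) (measurable_stratifiedVec n)]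
  simp only [Fin.sum_univ_succ, Function.comp_def, stratifiedVec, Fin.cons_zero, Fin.cons_succ,
    map_one_sub_unif01, sum_map_add_div_unif01 hn, Fintype.card_fin, Nat.cast_add, Nat.cast_one,
    add_smul, one_smul, add_comm unif01]

lemma ae_sum_symmetrization_stratifiedVec {n : ℕ} (hn : n ≠ 0) :
    ∀ᵐ v ∂symmetrization (unif01.map (stratifiedVec n)),
      ∑ k, v k = 1 + ∑ k : Fin n, (k : ℝ) / n := by
  have hmeas : MeasurableSet
      {v : Fin (n + 1) → ℝ | ∑ k, v k = 1 + ∑ k : Fin n, (k : ℝ) / n} :=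
    measurableSet_eq_fun (by fun_prop) measurable_const
  refine ae_symmetrization hmeas (fun σ v hv => (Equiv.sum_comp σ v).trans hv) ?_
  rw [ae_map_iff (measurable_stratifiedVec n).aemeasurable hmeas]
  exact .of_forall (sum_stratifiedVec hn)

lemma exists_measure_pearson_eq_neg_one_div {m : ℕ} (hm : 2 ≤ m) :
    ∃ V : Measure (Fin m → ℝ), IsProbabilityMeasure V ∧
      (∀ k, V.map (fun v => v k) = unif01) ∧
      ∀ k l, pearson V (fun v => v k) (fun v => v l) =
        if k = l then (1 : ℝ) else -(1 / ((m : ℝ) - 1)) := by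
  obtain ⟨n, rfl⟩ : ∃ n, m = n + 1 := ⟨m - 1, by lia⟩
  have hn : n ≠ 0 := by lia
  have hvar : Var[id; unif01] ≠ 0 := by simp [variance_id_unif01]
  have : IsProbabilityMeasure (unif01.map (stratifiedVec n)) :=
    Measure.isProbabilityMeasure_map (measurable_stratifiedVec n).aemeasurable
  have hlaw (k : Fin (n + 1)) :
      HasLaw (fun v => v k) unif01 (symmetrization (unif01.map (stratifiedVec n))) :=
    ⟨(measurable_pi_apply k).aemeasurable,
      map_eval_symmetrization_eq (sum_map_eval_stratifiedVec hn) k⟩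
  refine ⟨_, inferInstance, fun k => (hlaw k).map_eq, fun k l => ?_⟩
  split_ifs with hkl
  · exact hkl ▸ pearson_self_of_hasLaw (memLp_id_unif01 2) hvar (hlaw k)
  · simpa using isExchangeable_symmetrization.pearson_eq_neg_one_div (memLp_id_unif01 2) hvar hlaw
      (ae_sum_symmetrization_stratifiedVec hn) hkl

end Uniform

section Block

variable {S : ℕ} {ds : Fin S → ℕ} {ρ : Fin S → Fin S → ℝ}

lemma lamb_pos {s : Fin S} (hds : 2 ≤ ds s) (hρ : -(1 / ((ds s : ℝ) - 1)) < ρ s s) :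
    0 < lamb S ds ρ s := by
  have hd : (2 : ℝ) ≤ ds s := by exact_mod_cast hds
  have hd1 : (0 : ℝ) < ds s - 1 := by linarith
  rw [← neg_div, div_lt_iff₀ hd1] at hρ
  exact div_pos (by linarith) (by linarith)

lemma lamb_le_one {s : Fin S} (hds : 1 ≤ ds s) (hρ : ρ s s ≤ 1) : lamb S ds ρ s ≤ 1 := by
  have hd : (1 : ℝ) ≤ ds s := by exact_mod_cast hds
  refine div_le_one_of_le₀ ?_ (by linarith)
  nlinarith

lemma lamb_add_one_sub_lamb_mul {s : Fin S} (hds : 2 ≤ ds s) :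
    lamb S ds ρ s + (1 - lamb S ds ρ s) * -(1 / ((ds s : ℝ) - 1)) = ρ s s := by
  have hd : (2 : ℝ) ≤ ds s := by exact_mod_cast hds
  have hd0 : (ds s : ℝ) ≠ 0 := by linarith
  have hd1 : (ds s : ℝ) - 1 ≠ 0 := by linarith
  rw [lamb]
  field_simp
  ring

lemma lamb_mul_lamb_mul_corrM {s t : Fin S} (hst : s ≠ t) (hs : lamb S ds ρ s ≠ 0)
    (ht : lamb S ds ρ t ≠ 0) : lamb S ds ρ s * lamb S ds ρ t * corrM S ds ρ s t = ρ s t := by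
  obtain ⟨hs_num, hs_den⟩ := div_ne_zero_iff.1 hs
  obtain ⟨ht_num, ht_den⟩ := div_ne_zero_iff.1 ht
  simp only [lamb, corrM, Matrix.of_apply, if_neg hst]
  field_simp

lemma measurable_Wfun (i : (s : Fin S) × Fin (ds s)) : Measurable (Wfun S ds i) := by
  unfold Wfun
  fun_prop

variable {μU : Measure (Fin S → ℝ)} [IsProbabilityMeasure μU]
  {V : (s : Fin S) → Measure (Fin (ds s) → ℝ)} [∀ s, IsProbabilityMeasure (V s)]
  {κ : Measure ℝ}

lemma isProbabilityMeasure_mixMeasure (hlamb : ∀ s, lamb S ds ρ s ∈ Icc 0 1) :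
    IsProbabilityMeasure (mixMeasure S ds ρ μU V) := by
  have := fun s => isProbabilityMeasure_bern (hlamb s)
  unfold mixMeasure
  infer_instance

lemma hasLaw_pi_eval_apply (hV : ∀ s k, HasLaw (fun v => v k) κ (V s))
    (i : (s : Fin S) × Fin (ds s)) : HasLaw (fun v => v i.1 i.2) κ (Measure.pi V) :=
  (hV i.1 i.2).comp (measurePreserving_eval V i.1).hasLaw

variable [IsProbabilityMeasure κ]

lemma hasLaw_Wfun (hlamb : ∀ s, lamb S ds ρ s ∈ Icc 0 1)
    (hU : ∀ s, HasLaw (fun u => u s) κ μU) (hV : ∀ s k, HasLaw (fun v => v k) κ (V s))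
    (i : (s : Fin S) × Fin (ds s)) : HasLaw (Wfun S ds i) κ (mixMeasure S ds ρ μU V) := by
  have := fun s => isProbabilityMeasure_bern (hlamb s)
  exact hasLaw_switch (hU i.1) (hasLaw_pi_eval_apply hV i)
    (measurePreserving_eval (fun s => bern (lamb S ds ρ s)) i.1).hasLaw

lemma pearson_Wfun_same_block (hκ : MemLp id 2 κ) (hlamb : ∀ s, lamb S ds ρ s ∈ Icc 0 1)
    (hU : ∀ s, HasLaw (fun u => u s) κ μU) (hV : ∀ s k, HasLaw (fun v => v k) κ (V s))
    (s : Fin S) (k l : Fin (ds s)) :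
    pearson (mixMeasure S ds ρ μU V) (Wfun S ds ⟨s, k⟩) (Wfun S ds ⟨s, l⟩) =
      lamb S ds ρ s * pearson μU (fun u => u s) (fun u => u s) +
        (1 - lamb S ds ρ s) * pearson (V s) (fun v => v k) (fun v => v l) := by
  have := fun s => isProbabilityMeasure_bern (hlamb s)
  rw [← pearson_pi_eval V (measurable_pi_apply k) (measurable_pi_apply l)]
  exact pearson_switch_self hκ (hlamb s) (hU s) (hU s) (hasLaw_pi_eval_apply hV ⟨s, k⟩)
    (hasLaw_pi_eval_apply hV ⟨s, l⟩)
    (measurePreserving_eval (fun s => bern (lamb S ds ρ s)) s).hasLaw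

lemma pearson_Wfun_of_ne (hκ : MemLp id 2 κ) (hlamb : ∀ s, lamb S ds ρ s ∈ Icc 0 1)
    (hU : ∀ s, HasLaw (fun u => u s) κ μU) (hV : ∀ s k, HasLaw (fun v => v k) κ (V s))
    {i j : (s : Fin S) × Fin (ds s)} (hij : i.1 ≠ j.1) :
    pearson (mixMeasure S ds ρ μU V) (Wfun S ds i) (Wfun S ds j) =
      lamb S ds ρ i.1 * lamb S ds ρ j.1 * pearson μU (fun u => u i.1) (fun u => u j.1) := by
  have := fun s => isProbabilityMeasure_bern (hlamb s)
  have hswitch := pearson_switch_of_indepFun hκ (hlamb i.1) (hlamb j.1) (hU i.1) (hU j.1)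
    (hasLaw_pi_eval_apply hV i) (hasLaw_pi_eval_apply hV j)
    (measurePreserving_eval (fun s => bern (lamb S ds ρ s)) i.1).hasLaw
    (measurePreserving_eval (fun s => bern (lamb S ds ρ s)) j.1).hasLaw (indepFun_pi_eval _ hij)
  rw [pearson_pi_eval_of_ne V hij (measurable_pi_apply i.2) (measurable_pi_apply j.2), mul_zero,
    add_zero] at hswitch
  exact hswitch

lemma pearson_Wfun_eq_blockMatrix (hκ : MemLp id 2 κ) (hds : ∀ s, 2 ≤ ds s)
    (hlamb : ∀ s, lamb S ds ρ s ∈ Ioc 0 1)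
    (hU : ∀ s, HasLaw (fun u => u s) κ μU)
    (hUcorr : ∀ k l, pearson μU (fun u => u k) (fun u => u l) = corrM S ds ρ k l)
    (hV : ∀ s k, HasLaw (fun v => v k) κ (V s))
    (hVcorr : ∀ s k l, pearson (V s) (fun v => v k) (fun v => v l) =
      if k = l then (1 : ℝ) else -(1 / ((ds s : ℝ) - 1)))
    (i j : (s : Fin S) × Fin (ds s)) :
    pearson (mixMeasure S ds ρ μU V) (Wfun S ds i) (Wfun S ds j) = blockMatrix S ds ρ i j := by
  have hlamb' (s : Fin S) := Ioc_subset_Icc_self (hlamb s)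
  by_cases hblock : i.1 = j.1
  · obtain ⟨s, k⟩ := i
    obtain ⟨t, l⟩ := j
    obtain rfl : s = t := hblock
    rw [pearson_Wfun_same_block hκ hlamb' hU hV, hUcorr, hVcorr]
    by_cases hkl : k = l
    · simp [corrM, blockMatrix, hkl]
    · simpa [corrM, blockMatrix, hkl, Fin.val_inj] using
        lamb_add_one_sub_lamb_mul (ρ := ρ) (hds s)
  · rw [pearson_Wfun_of_ne hκ hlamb' hU hV hblock, hUcorr,
      lamb_mul_lamb_mul_corrM hblock (hlamb _).1.ne' (hlamb _).1.ne']
    simp [blockMatrix, hblock]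

end Block

/-- if the `S×S` matrix `M` is the correlation matrix of a random vector
with uniform (0,1) margins, then so is the `d×d` block homogeneous matrix `P`; moreover
the explicit construction `W_{(s,k)} = B_s U_s + (1 − B_s) V_{s,k}` has uniform margins
and correlation matrix `P`. -/
theorem block_spearman_rho_compatibility
    (S : ℕ) (ds : Fin S → ℕ) (hds : ∀ s, 2 ≤ ds s)
    (ρ : Fin S → Fin S → ℝ) (hsym : ∀ s t, ρ s t = ρ t s)
    (hrange : ∀ s t, ρ s t ∈ Set.Icc (-1:ℝ) 1)
    (hρss : ∀ s, -(1 / ((ds s : ℝ) - 1)) < ρ s s ∧ ρ s s < 1) :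
    ((∃ μU : Measure (Fin S → ℝ), IsProbabilityMeasure μU ∧
        (∀ s, μU.map (fun u => u s) = unif01) ∧
        (∀ k l : Fin S, pearson μU (fun u => u k) (fun u => u l) = corrM S ds ρ k l)) →
      ∃ μ : Measure (((s : Fin S) × Fin (ds s)) → ℝ), IsProbabilityMeasure μ ∧
        (∀ i, μ.map (fun w => w i) = unif01) ∧
        (∀ i j, pearson μ (fun w => w i) (fun w => w j) = blockMatrix S ds ρ i j)) ∧
    (∀ μU : Measure (Fin S → ℝ), IsProbabilityMeasure μU →
      (∀ s, μU.map (fun u => u s) = unif01) →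
      (∀ k l : Fin S, pearson μU (fun u => u k) (fun u => u l) = corrM S ds ρ k l) →
      ∀ V : (s : Fin S) → Measure (Fin (ds s) → ℝ),
        (∀ s, IsProbabilityMeasure (V s)) →
        (∀ s, ∀ k : Fin (ds s), (V s).map (fun v => v k) = unif01) →
        (∀ s, ∀ k l : Fin (ds s), pearson (V s) (fun v => v k) (fun v => v l)
            = if k = l then (1:ℝ) else -(1 / ((ds s : ℝ) - 1))) →
        (∀ i : (s : Fin S) × Fin (ds s),
            (mixMeasure S ds ρ μU V).map (Wfun S ds i) = unif01) ∧
        (∀ i j : (s : Fin S) × Fin (ds s),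
            pearson (mixMeasure S ds ρ μU V) (Wfun S ds i) (Wfun S ds j)
              = blockMatrix S ds ρ i j)) := by
  have hlamb (s : Fin S) : lamb S ds ρ s ∈ Ioc 0 1 :=
    ⟨lamb_pos (hds s) (hρss s).1, lamb_le_one (one_le_two.trans (hds s)) (hρss s).2.le⟩
  have hlamb' (s : Fin S) := Ioc_subset_Icc_self (hlamb s)
  refine (and_iff_right_of_imp ?_).2 ?_
  · rintro hW ⟨μU, hUprob, hU, hUcorr⟩
    choose V hVprob hV hVcorr using fun s => exists_measure_pearson_eq_neg_one_div (hds s)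
    obtain ⟨hlaw, hcorr⟩ := hW μU hUprob hU hUcorr V hVprob hV hVcorr
    have hmeas : Measurable fun ω i => Wfun S ds i ω := measurable_pi_iff.2 measurable_Wfun
    have := isProbabilityMeasure_mixMeasure (μU := μU) (V := V) hlamb'
    refine ⟨(mixMeasure S ds ρ μU V).map fun ω i => Wfun S ds i ω,
      Measure.isProbabilityMeasure_map hmeas.aemeasurable, fun i => ?_, fun i j => ?_⟩
    · exact (Measure.map_map (measurable_pi_apply i) hmeas).trans (hlaw i)
    · exact (pearson_map hmeas (measurable_pi_apply i) (measurable_pi_apply j)).trans (hcorr i j)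
  · intro μU _ hU hUcorr V _ hV hVcorr
    have hUlaw (s) : HasLaw (fun u => u s) unif01 μU :=
      ⟨(measurable_pi_apply s).aemeasurable, hU s⟩
    have hVlaw (s k) : HasLaw (fun v => v k) unif01 (V s) :=
      ⟨(measurable_pi_apply k).aemeasurable, hV s k⟩
    exact ⟨fun i => (hasLaw_Wfun hlamb' hUlaw hVlaw i).map_eq,
      pearson_Wfun_eq_blockMatrix (memLp_id_unif01 2) hds hlamb hUlaw hUcorr hVlaw hVcorr⟩
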